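/- Let k ≥ 3, 1 ≤ ℓ ≤ k−1, a ≥ 1, 0 ≤ x ≤ k be integers, and set b = 2x + ℓ + (k−ℓ)a. Suppose 0 < ε ≤ ℓ/(3a) and 1/n ≪ 1/C ≪ γ, 1/a, 1/k. Let G = 𝔾^{(k)}(n,p) with p ≥ n^{−(k−ℓ)−ε} if ℓ ≥ 2 and p ≥ C·n^{−(k−1)} if ℓ = 1. Then with probability 1 − o(1), G contains at most 4·b²·n^{2b−1}·p^{2a} pairs of overlapping (i.e., not vertex-disjoint) labeled copies of P_{a,x}. -/

import Mathlib

open Finset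
open scoped Classical

/-- All `k`-subsets of `Fin n` (the possible edges of a `k`-graph on `n` vertices). -/
def kSets (n k : ℕ) : Finset (Finset (Fin n)) := Finset.univ.powersetCard k

/-- The probability that the binomial random `k`-graph `G^{(k)}(n,p)` (each `k`-set is an
edge independently with probability `p`) has an edge set satisfying the property `A`. -/
noncomputable def gProb (n k : ℕ) (p : ℝ) (A : Finset (Finset (Fin n)) → Prop) : ℝ :=
  ∑ E ∈ (kSets n k).powerset.filter (fun E => A E),
    p ^ E.card * (1 - p) ^ ((kSets n k).card - E.card)

/-- Expectation of a random variable `f` of the random `k`-graph `G^{(k)}(n,p)`. -/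
noncomputable def gExpect (n k : ℕ) (p : ℝ) (f : Finset (Finset (Fin n)) → ℝ) : ℝ :=
  ∑ E ∈ (kSets n k).powerset,
    p ^ E.card * (1 - p) ^ ((kSets n k).card - E.card) * f E

/-- The degree of a vertex set `S` in the `k`-graph with edge set `E`: the number of edges
containing `S` (equivalently, the number of `(k-|S|)`-sets `T` with `S ∪ T ∈ E`). -/
def degOf {n : ℕ} (E : Finset (Finset (Fin n))) (S : Finset (Fin n)) : ℕ :=
  (E.filter (fun e => S ⊆ e)).card

/-- The minimum vertex degree (minimum 1-degree) of a `k`-graph. -/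
noncomputable def minVertexDeg {n : ℕ} (E : Finset (Finset (Fin n))) : ℕ :=
  sInf {d : ℕ | ∃ v : Fin n, degOf E {v} = d}

/-- The index set of the `i`-th edge of the path `P_{a,x}`:
`{x + i*d, x + i*d + 1, …, x + i*d + k - 1}` (here `d = k - ℓ`). -/
def edgeIdx (k d x i : ℕ) : Finset ℕ := (Finset.range k).image (fun j => x + i * d + j)

/-- The ordered `b`-tuple `w` spans a labeled copy of `P_{a,x}` (the `k`-uniform `ℓ`-path
with `a` edges, preceded and followed by `x` isolated vertices) in the edge set `E`. -/
def SpansPax {n : ℕ} (k ℓ a x : ℕ) (E : Finset (Finset (Fin n))) {b : ℕ}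
    (w : Fin b → Fin n) : Prop :=
  Function.Injective w ∧
  ∀ i < a,
    ((Finset.univ.filter (fun m : Fin b => (m : ℕ) ∈ edgeIdx k (k - ℓ) x i)).image w) ∈ E

/-- The ordered tuple `w` spans a labeled copy of the `ℓ`-path `P_a` of length `a` in `E`. -/
def SpansPath {n : ℕ} (k ℓ a : ℕ) (E : Finset (Finset (Fin n))) {b : ℕ}
    (w : Fin b → Fin n) : Prop :=
  SpansPax k ℓ a 0 E w

/-- The first `ℓ`-end of the ordered tuple `w` (its first `ℓ` vertices, as a set). -/
def firstEnd {n b : ℕ} (ℓ : ℕ) (w : Fin b → Fin n) : Finset (Fin n) :=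
  (Finset.univ.filter (fun m : Fin b => (m : ℕ) < ℓ)).image w

/-- The last `ℓ`-end of the ordered tuple `w` (its last `ℓ` vertices, as a set). -/
def lastEnd {n b : ℕ} (ℓ : ℕ) (w : Fin b → Fin n) : Finset (Fin n) :=
  (Finset.univ.filter (fun m : Fin b => b - ℓ ≤ (m : ℕ))).image w

/-- The `k`-graph with edge set `E` on vertex set `Fin n` contains a Hamiltonian `ℓ`-cycle:
there is a cyclic ordering of all `n` vertices such that each of the `n/(k-ℓ)` edges
consists of `k` consecutive vertices, consecutive edges overlapping in `ℓ` vertices. -/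
def IsHamCycle (n k ℓ : ℕ) (E : Finset (Finset (Fin n))) : Prop :=
  ∃ f : ZMod n → Fin n, Function.Bijective f ∧
    ∀ i < n / (k - ℓ),
      ((Finset.range k).image (fun j => f (((i * (k - ℓ) + j : ℕ) : ZMod n)))) ∈ E

/-- The `ℓ`-shadow of a `k`-graph: all `ℓ`-sets contained in some edge. -/
def shadowL {n : ℕ} (ℓ : ℕ) (E : Finset (Finset (Fin n))) : Finset (Finset (Fin n)) :=
  (Finset.univ.powersetCard ℓ).filter (fun S => ∃ e ∈ E, S ⊆ e)

/-- The list `v` of vertices spans a copy of the `ℓ`-path `P_a` of length `a` in `E`. -/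
def ListSpans {n : ℕ} (k ℓ a : ℕ) (E : Finset (Finset (Fin n))) (v : List (Fin n)) : Prop :=
  v.Nodup ∧ v.length = a * (k - ℓ) + ℓ ∧
    ∀ i < a, ((v.drop (i * (k - ℓ))).take k).toFinset ∈ E

/-- `Φ_F(n,p) = min { n^{v_H} p^{e_H} : H ⊆ F, e_H > 0 }`, where the subgraph `H` is given
by a nonempty edge set `E' ⊆ F` together with a vertex set `W` containing all its edges. -/
noncomputable def Phi {V : Type*} (n : ℕ) (p : ℝ) (F : Finset (Finset V)) : ℝ :=
  sInf {r : ℝ | ∃ (W : Finset V) (E' : Finset (Finset V)),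
    E' ⊆ F ∧ E'.Nonempty ∧ (∀ e ∈ E', e ⊆ W) ∧ r = (n : ℝ) ^ W.card * p ^ E'.card}

/-- The ordered tuple `w` spans a labeled copy of the `k`-graph `F` (given by its edge set
`Fe` on vertex set `Fin s`) in the edge set `E`. -/
def SpansCopy {n s : ℕ} (Fe : Finset (Finset (Fin s))) (E : Finset (Finset (Fin n)))
    (w : Fin s → Fin n) : Prop :=
  ∀ e ∈ Fe, e.image w ∈ E

/-- Concatenation of three ordered tuples. -/
def concat3 {n p q r : ℕ} (A : Fin p → Fin n) (C : Fin q → Fin n) (B : Fin r → Fin n)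
    (m : Fin (p + q + r)) : Fin n :=
  if h : (m : ℕ) < p then A ⟨(m : ℕ), h⟩
  else if h2 : (m : ℕ) < p + q then C ⟨(m : ℕ) - p, by omega⟩
  else B ⟨(m : ℕ) - (p + q), by have := m.isLt; omega⟩

/-- `w`, spanning an `ℓ`-path of length `a`, is a `W`-absorber in `E`: it avoids `W`, and
its vertex set together with `W` spans an `ℓ`-path (of length `a+1` when `|W| = k - ℓ`)
with the same two `ℓ`-ends. -/
def IsAbsorber {n : ℕ} (k ℓ a : ℕ) (E : Finset (Finset (Fin n))) {b : ℕ}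
    (w : Fin b → Fin n) (W : Finset (Fin n)) : Prop :=
  (∀ m, w m ∉ W) ∧
  ∃ w' : Fin (b + W.card) → Fin n, SpansPath k ℓ (a + 1) E w' ∧
    Finset.image w' Finset.univ = Finset.image w Finset.univ ∪ W ∧
    firstEnd ℓ w' = firstEnd ℓ w ∧ lastEnd ℓ w' = lastEnd ℓ w


/-- The number of ordered pairs of overlapping (sharing a vertex) labeled copies of
`P_{a,x}` in `E`. -/
noncomputable def paxOverlapPairCount (n k ℓ a x b : ℕ) (E : Finset (Finset (Fin n))) : ℕ :=
  (Finset.univ.filter (fun ww : (Fin b → Fin n) × (Fin b → Fin n) =>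
    SpansPax k ℓ a x E ww.1 ∧ SpansPax k ℓ a x E ww.2 ∧
    ∃ m m' : Fin b, ww.1 m = ww.2 m')).card

/-!
The number of overlapping pairs of copies of `F` is a sum of indicators of events `S ⊆ E`, so its
mean and variance are sums of powers `p ^ #S`, and Chebyshev's inequality applies.

Both are controlled by one extension estimate. Fix a vertex set `U` of bounded size and a set of
already paid edges inside `U`. A copy of `F` that meets `U` and reuses `t ≥ 1` of those edges saves
a factor `p ^ t` in its probability, but the vertices of the reused edges, `j` of them say, are
confined to `U`, which costs `n ^ j` choices. Since `Q n ≤ Φ_F(n, p) ≤ n ^ j p ^ t`, such copies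
contribute at most `1 / Q` times the bound `n ^ (b - 1) p ^ #F` for copies that merely meet `U` in
one vertex.

Applied once, this bounds the mean by `2 b² n ^ (2 b - 1) p ^ (2 #F)`. Two indicators are correlated
only if their pairs of copies share an edge; applied twice, to the two copies of the second pair,
the estimate loses a factor `n` both times whereas the mean loses only one, so the variance is
`O(1 / n)` times the square of this bound.

For `F = P_{a,x}`, any `t ≥ 1` edges span at least `ℓ + t (k - ℓ)` vertices, which together with the
lower bound on `p` gives `Q n ≤ Φ_F(n, p)`.
-/

section BinomialSubset

variable {α : Type*} (K : Finset α) (p : ℝ)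

/-- The probability that the random subset of `K` containing each element independently with
probability `p` equals `E`. The exponent `#K - #E` is truncated, so this is meant for `E ⊆ K`. -/
noncomputable def binomialWeight (E : Finset α) : ℝ := p ^ #E * (1 - p) ^ (#K - #E)

/-- Expectation over the binomial random subset of `K`, as a linear functional on random
variables. Probabilities are written as expectations of indicator functions. -/
noncomputable def binomialExpect : (Finset α → ℝ) →ₗ[ℝ] ℝ :=
  ∑ E ∈ K.powerset, binomialWeight K p E • LinearMap.proj E

/-- The variance of a random variable of the binomial random subset of `K`. -/
noncomputable def binomialVariance (f : Finset α → ℝ) : ℝ :=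
  binomialExpect K p fun E ↦ (f E - binomialExpect K p f) ^ 2

lemma binomialExpect_apply (f : Finset α → ℝ) :
    binomialExpect K p f = ∑ E ∈ K.powerset, binomialWeight K p E * f E := by
  simp [binomialExpect, LinearMap.sum_apply]

lemma binomialExpect_one : binomialExpect K p 1 = 1 := by
  simp [binomialExpect_apply, binomialWeight, sum_pow_mul_eq_add_pow]

variable {K p}

lemma binomialExpect_mono (hp0 : 0 ≤ p) (hp1 : p ≤ 1) {f g : Finset α → ℝ} (hfg : f ≤ g) :
    binomialExpect K p f ≤ binomialExpect K p g := by
  simp only [binomialExpect_apply]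
  exact sum_le_sum fun E _ ↦ mul_le_mul_of_nonneg_left (hfg E) <|
    mul_nonneg (pow_nonneg hp0 _) (pow_nonneg (sub_nonneg.2 hp1) _)

lemma binomialExpect_nonneg (hp0 : 0 ≤ p) (hp1 : p ≤ 1) {f : Finset α → ℝ} (hf : 0 ≤ f) :
    0 ≤ binomialExpect K p f := by
  simpa using binomialExpect_mono (K := K) hp0 hp1 hf

lemma one_sub_binomialVariance_div_sq_le (hp0 : 0 ≤ p) (hp1 : p ≤ 1) (f : Finset α → ℝ) {t : ℝ}
    (ht : 0 < t) :
    1 - binomialVariance K p f / t ^ 2 ≤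
      binomialExpect K p ({E | f E ≤ binomialExpect K p f + t}.indicator 1) := by
  set μ := binomialExpect K p f
  have markov : 1 - (t ^ 2)⁻¹ • (fun E ↦ (f E - μ) ^ 2) ≤ {E | f E ≤ μ + t}.indicator 1 := by
    intro E
    by_cases hE : f E ≤ μ + t
    · simp only [Pi.sub_apply, Pi.one_apply, Pi.smul_apply, Set.indicator, Set.mem_ofPred_eq, hE,
        if_true, sub_le_self_iff, smul_eq_mul]
      positivity
    · have : t ^ 2 ≤ (f E - μ) ^ 2 := by gcongr; linarith
      simpa [Set.indicator, hE, ← div_eq_inv_mul, one_le_div (pow_pos ht 2)] using this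
  have := binomialExpect_mono (K := K) hp0 hp1 markov
  rwa [map_sub, map_smul, binomialExpect_one, smul_eq_mul, ← div_eq_inv_mul] at this

lemma binomialVariance_eq_sub_sq (f : Finset α → ℝ) :
    binomialVariance K p f = binomialExpect K p (f * f) - binomialExpect K p f ^ 2 := by
  set μ := binomialExpect K p f with hμ
  have expand : (fun E ↦ (f E - μ) ^ 2) = f * f - (2 * μ) • f + μ ^ 2 • 1 := by
    ext E
    simp only [Pi.add_apply, Pi.sub_apply, Pi.mul_apply, Pi.smul_apply, Pi.one_apply, smul_eq_mul]
    ring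
  rw [binomialVariance, ← hμ, expand, map_add, map_sub, map_smul, map_smul, binomialExpect_one,
    ← hμ]
  simp only [smul_eq_mul]
  ring

lemma binomialExpect_indicator_Ici_of_not_subset {S : Finset α} (hS : ¬ S ⊆ K) :
    binomialExpect K p ((Set.Ici S).indicator 1) = 0 := by
  rw [binomialExpect_apply]
  refine sum_eq_zero fun E hE ↦ ?_
  have : ¬ S ⊆ E := fun h ↦ hS (h.trans (mem_powerset.1 hE))
  simp [this]

lemma binomialExpect_indicator_Ici_of_subset {S : Finset α} (hS : S ⊆ K) :
    binomialExpect K p ((Set.Ici S).indicator 1) = p ^ #S := by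
  have hdisj : ∀ R ∈ (K \ S).powerset, Disjoint S R := fun R hR ↦
    disjoint_sdiff.mono_right (mem_powerset.1 hR)
  calc binomialExpect K p ((Set.Ici S).indicator 1)
      = ∑ E ∈ Icc S K, binomialWeight K p E := by
        rw [binomialExpect_apply, Icc_eq_filter_powerset, sum_filter]
        simp [Set.indicator_apply]
    _ = ∑ R ∈ (K \ S).powerset, binomialWeight K p (S ∪ R) := by
        rw [Icc_eq_image_powerset hS, sum_image]
        intro R hR R' hR' h
        rw [← (hdisj R hR).sup_sdiff_cancel_left, ← (hdisj R' hR').sup_sdiff_cancel_left]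
        exact congrArg (· \ S) h
    _ = ∑ R ∈ (K \ S).powerset, p ^ #S * binomialWeight (K \ S) p R := by
        refine sum_congr rfl fun R hR ↦ ?_
        rw [binomialWeight, binomialWeight, card_union_of_disjoint (hdisj R hR),
          card_sdiff_of_subset hS, pow_add, Nat.sub_sub, mul_assoc]
    _ = p ^ #S := by
        rw [← mul_sum]
        simpa [binomialExpect_apply] using congrArg (p ^ #S * ·) (binomialExpect_one (K \ S) p)

lemma binomialExpect_indicator_Ici_le (hp0 : 0 ≤ p) (S : Finset α) :
    binomialExpect K p ((Set.Ici S).indicator 1) ≤ p ^ #S := by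
  by_cases hS : S ⊆ K
  · exact (binomialExpect_indicator_Ici_of_subset hS).le
  · rw [binomialExpect_indicator_Ici_of_not_subset hS]
    positivity

variable [DecidableEq α]

lemma binomialExpect_indicator_Ici_union_sub_le (hp0 : 0 ≤ p) (hp1 : p ≤ 1) (S T : Finset α) :
    binomialExpect K p ((Set.Ici (S ∪ T)).indicator 1) -
        binomialExpect K p ((Set.Ici S).indicator 1) * binomialExpect K p ((Set.Ici T).indicator 1)
      ≤ if Disjoint S T then 0 else p ^ #(S ∪ T) := by
  have hnonneg : ∀ R : Finset α, 0 ≤ binomialExpect K p ((Set.Ici R).indicator 1) := fun R ↦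
    binomialExpect_nonneg hp0 hp1 (Set.indicator_nonneg fun _ _ ↦ zero_le_one)
  have hprod := mul_nonneg (hnonneg S) (hnonneg T)
  split_ifs with hST
  · by_cases hK : S ∪ T ⊆ K
    · rw [binomialExpect_indicator_Ici_of_subset hK,
        binomialExpect_indicator_Ici_of_subset (subset_union_left.trans hK),
        binomialExpect_indicator_Ici_of_subset (subset_union_right.trans hK),
        card_union_of_disjoint hST, pow_add, sub_self]
    · rw [binomialExpect_indicator_Ici_of_not_subset hK]
      linarith
  · linarith [binomialExpect_indicator_Ici_le (K := K) hp0 (S ∪ T)]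

variable {ι : Type*} (s : Finset ι) (S : ι → Finset α)

lemma binomialVariance_sum_indicator_Ici_le (hp0 : 0 ≤ p) (hp1 : p ≤ 1) :
    binomialVariance K p (∑ i ∈ s, (Set.Ici (S i)).indicator 1) ≤
      ∑ i ∈ s, ∑ j ∈ s with ¬ Disjoint (S i) (S j), p ^ #(S i ∪ S j) := by
  have hmul : ∀ i j, ((Set.Ici (S i)).indicator 1 * (Set.Ici (S j)).indicator 1 :
      Finset α → ℝ) = (Set.Ici (S i ∪ S j)).indicator 1 := fun i j ↦ by
    rw [← Set.inter_indicator_one, Set.Ici_inter_Ici, sup_eq_union]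
  rw [binomialVariance_eq_sub_sq, sum_mul_sum, sq, map_sum, map_sum, sum_mul_sum,
    ← sum_sub_distrib]
  refine sum_le_sum fun i _ ↦ ?_
  rw [map_sum, ← sum_sub_distrib, sum_filter]
  refine sum_le_sum fun j _ ↦ ?_
  rw [hmul, ite_not]
  exact binomialExpect_indicator_Ici_union_sub_le hp0 hp1 (S i) (S j)

lemma one_sub_le_binomialExpect_indicator_card_le (hp0 : 0 ≤ p) (hp1 : p ≤ 1) {m δ : ℝ}
    (hm : 0 < m) (hmean : ∑ i ∈ s, p ^ #(S i) ≤ m)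
    (hvar : ∑ i ∈ s, ∑ j ∈ s with ¬ Disjoint (S i) (S j), p ^ #(S i ∪ S j) ≤ δ * m ^ 2) :
    1 - δ ≤ binomialExpect K p ({E | (#{i ∈ s | S i ⊆ E} : ℝ) ≤ 2 * m}.indicator 1) := by
  set X : Finset α → ℝ := ∑ i ∈ s, (Set.Ici (S i)).indicator 1 with hX
  have hcount : ∀ E, (#{i ∈ s | S i ⊆ E} : ℝ) = X E := fun E ↦ by
    simp [hX, Set.indicator_apply]
  have hEX : binomialExpect K p X ≤ m := by
    rw [hX, map_sum]
    exact (sum_le_sum fun i _ ↦ binomialExpect_indicator_Ici_le hp0 (S i)).trans hmean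
  have hVar : binomialVariance K p X ≤ δ * m ^ 2 :=
    (binomialVariance_sum_indicator_Ici_le s S hp0 hp1).trans hvar
  calc 1 - δ ≤ 1 - binomialVariance K p X / m ^ 2 := by
        gcongr
        rwa [div_le_iff₀ (by positivity)]
    _ ≤ binomialExpect K p ({E | X E ≤ binomialExpect K p X + m}.indicator 1) :=
        one_sub_binomialVariance_div_sq_le hp0 hp1 X hm
    _ ≤ binomialExpect K p ({E | (#{i ∈ s | S i ⊆ E} : ℝ) ≤ 2 * m}.indicator 1) := by
        refine binomialExpect_mono hp0 hp1 (Set.indicator_le_indicator_of_subset ?_ ?_)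
        · intro E hE
          rw [Set.mem_ofPred_eq] at hE ⊢
          linarith [hcount E]
        · exact fun _ ↦ zero_le_one

end BinomialSubset

section Copies

variable {V β : Type*}

/-- The edge set of the copy of the hypergraph `F` on `β` given by the vertex placement `w`. -/
def copyEdges (F : Finset (Finset β)) (w : β ↪ V) : Finset (Finset V) :=
  F.map (mapEmbedding w).toEmbedding

lemma card_copyEdges (F : Finset (Finset β)) (w : β ↪ V) : #(copyEdges F w) = #F :=
  card_map _

lemma subset_map_univ_of_mem_copyEdges [Fintype β] {F : Finset (Finset β)} {w : β ↪ V}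
    {e : Finset V} (he : e ∈ copyEdges F w) : e ⊆ univ.map w := by
  obtain ⟨f, -, rfl⟩ := mem_map.1 he
  exact map_subset_map.2 (subset_univ f)

variable [DecidableEq V]

lemma card_copyEdges_sdiff (F : Finset (Finset β)) (w : β ↪ V) (D : Finset (Finset V)) :
    #(copyEdges F w \ D) = #F - #{e ∈ F | e.map w ∈ D} := by
  rw [← card_filter_add_card_filter_not (s := F) (fun e ↦ e.map w ∈ D), Nat.add_sub_cancel_left,
    ← card_map (mapEmbedding w).toEmbedding (s := {e ∈ F | ¬ e.map w ∈ D}), copyEdges]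
  congr 1
  ext e
  simp only [mem_sdiff, mem_map, mem_filter]
  aesop

/-- The edges spanned by a pair of copies of `F`. -/
def pairEdges (F : Finset (Finset β)) (q : (β ↪ V) × (β ↪ V)) : Finset (Finset V) :=
  copyEdges F q.1 ∪ copyEdges F q.2

lemma pairEdges_swap (F : Finset (Finset β)) (q : (β ↪ V) × (β ↪ V)) :
    pairEdges F q.swap = pairEdges F q :=
  union_comm _ _

lemma card_pairEdges_sdiff (F : Finset (Finset β)) (q : (β ↪ V) × (β ↪ V))
    (D : Finset (Finset V)) :
    #(pairEdges F q \ D) =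
      #(copyEdges F q.1 \ D) + #(copyEdges F q.2 \ (D ∪ copyEdges F q.1)) := by
  rw [← card_union_of_disjoint, pairEdges]
  · congr 1
    ext e
    simp only [mem_union, mem_sdiff]
    tauto
  · refine disjoint_left.2 fun e he he' ↦ ?_
    simp only [mem_union, mem_sdiff] at he he'
    tauto

variable [Fintype V] [Fintype β]

/-- Vertex placements using at least one vertex of `U`. -/
noncomputable def placementsMeeting (β : Type*) [Fintype β] (U : Finset V) : Finset (β ↪ V) :=
  {w | ∃ v, w v ∈ U}

lemma mem_placementsMeeting {U : Finset V} {w : β ↪ V} :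
    w ∈ placementsMeeting β U ↔ ∃ v, w v ∈ U := by
  simp [placementsMeeting]

lemma placementsMeeting_mono {U U' : Finset V} (h : U ⊆ U') :
    placementsMeeting β U ⊆ placementsMeeting β U' := fun _ hw ↦
  mem_placementsMeeting.2 <| (mem_placementsMeeting.1 hw).imp fun _ hv ↦ h hv

/-- Pairs of vertex placements sharing a vertex. -/
noncomputable def overlappingPairs (β V : Type*) [Fintype β] [Fintype V] [DecidableEq V] :
    Finset ((β ↪ V) × (β ↪ V)) :=
  {q | ∃ i j, q.1 i = q.2 j}

lemma mem_overlappingPairs {q : (β ↪ V) × (β ↪ V)} :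
    q ∈ overlappingPairs β V ↔ q.2 ∈ placementsMeeting β (univ.map q.1) := by
  simp only [overlappingPairs, mem_filter_univ, mem_placementsMeeting, mem_map, mem_univ, true_and]
  exact exists_comm

lemma swap_mem_overlappingPairs {q : (β ↪ V) × (β ↪ V)} :
    q.swap ∈ overlappingPairs β V ↔ q ∈ overlappingPairs β V := by
  simp only [overlappingPairs, mem_filter_univ, Prod.fst_swap, Prod.snd_swap]
  rw [exists_comm]
  simp only [eq_comm]

lemma card_filter_forall_mem_le (J : Finset β) (U : Finset V) :
    #{w : β ↪ V | ∀ j ∈ J, w j ∈ U} ≤ #U ^ #J * Fintype.card V ^ (Fintype.card β - #J) := by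
  calc #{w : β ↪ V | ∀ j ∈ J, w j ∈ U}
      ≤ #(Fintype.piFinset fun j ↦ if j ∈ J then U else univ) := by
        refine card_le_card_of_injOn (fun w ↦ ⇑w) (fun w hw ↦ ?_) DFunLike.coe_injective.injOn
        rw [mem_coe, mem_filter_univ] at hw
        rw [mem_coe, Fintype.mem_piFinset]
        intro j
        split_ifs with hj
        exacts [hw j hj, mem_univ _]
    _ = #U ^ #J * Fintype.card V ^ (Fintype.card β - #J) := by
        simp [Fintype.card_piFinset, apply_ite card, prod_ite, filter_not, card_univ_sdiff]

lemma card_placementsMeeting_le (U : Finset V) :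
    #(placementsMeeting β U) ≤ Fintype.card β * (#U * Fintype.card V ^ (Fintype.card β - 1)) := by
  calc #(placementsMeeting β U)
      = #(univ.biUnion fun v : β ↦ {w : β ↪ V | ∀ j ∈ ({v} : Finset β), w j ∈ U}) := by
        congr 1
        ext w
        simp [mem_placementsMeeting]
    _ ≤ Fintype.card β * (#U * Fintype.card V ^ (Fintype.card β - 1)) :=
        card_biUnion_le_card_mul _ _ _ fun v _ ↦ by
          simpa using card_filter_forall_mem_le {v} U

end Copies

section Extension

lemma Phi_le {β : Type*} {n : ℕ} {p : ℝ} (hp : 0 ≤ p) {F D : Finset (Finset β)} {W : Finset β}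
    (hDF : D ⊆ F) (hD : D.Nonempty) (hW : ∀ e ∈ D, e ⊆ W) :
    Phi n p F ≤ (n : ℝ) ^ #W * p ^ #D := by
  refine csInf_le ⟨0, ?_⟩ ⟨W, D, hDF, hD, hW, rfl⟩
  rintro - ⟨W', D', -, -, -, rfl⟩
  positivity

lemma le_Phi {β : Type*} {n : ℕ} {p r : ℝ} {F : Finset (Finset β)} (hF : F.Nonempty)
    (h : ∀ (W : Finset β) (D : Finset (Finset β)), D ⊆ F → D.Nonempty → (∀ e ∈ D, e ⊆ W) →
      r ≤ (n : ℝ) ^ #W * p ^ #D) :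
    r ≤ Phi n p F := by
  refine le_csInf ⟨_, F.sup id, F, Subset.rfl, hF, fun e he ↦ le_sup (f := id) he, rfl⟩ ?_
  rintro - ⟨W, D, hDF, hD, hW, rfl⟩
  exact h W D hDF hD hW

lemma pow_sub_mul_pow_sub_le {x p Q : ℝ} {j b t f : ℕ} (hx : 1 ≤ x) (hp : 0 ≤ p) (hQ : 0 < Q)
    (hj : j ≤ b) (ht : t ≤ f) (h : Q * x ≤ x ^ j * p ^ t) :
    x ^ (b - j) * p ^ (f - t) ≤ x ^ (b - 1) * p ^ f / Q := by
  have hx0 : 0 < x := by positivity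
  rw [le_div_iff₀ hQ, ← mul_le_mul_iff_left₀ hx0]
  calc x ^ (b - j) * p ^ (f - t) * Q * x
      = x ^ (b - j) * p ^ (f - t) * (Q * x) := mul_assoc _ _ _
    _ ≤ x ^ (b - j) * p ^ (f - t) * (x ^ j * p ^ t) := by gcongr
    _ = x ^ b * p ^ f := by
        rw [mul_mul_mul_comm, pow_sub_mul_pow _ hj, pow_sub_mul_pow _ ht]
    _ ≤ x ^ (b - 1 + 1) * p ^ f := by gcongr; omega
    _ = x ^ (b - 1) * p ^ f * x := by ring

variable {V β : Type*} [Fintype V] [Fintype β]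

/-- The expected number of copies of `F` in the binomial random hypergraph on `V` whose vertex in
a given position is prescribed, up to a factor tending to `1`. -/
noncomputable def rootedMean (V : Type*) [Fintype V] (F : Finset (Finset β)) (p : ℝ) : ℝ :=
  (Fintype.card V : ℝ) ^ (Fintype.card β - 1) * p ^ #F

lemma rootedMean_nonneg {F : Finset (Finset β)} {p : ℝ} (hp : 0 ≤ p) : 0 ≤ rootedMean V F p := by
  unfold rootedMean
  positivity

/-- An upper bound for the expected number of copies of `F` meeting a set of `u` vertices, valid
as long as `Q * n ≤ Φ_F(n, p)` for `n = |V|`, even after conditioning on the presence of all the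
edges inside the `u`-set. -/
noncomputable def extensionBound (V : Type*) [Fintype V] (F : Finset (Finset β)) (p Q : ℝ)
    (u : ℕ) : ℝ :=
  (Fintype.card β * u + 2 ^ #F * u ^ Fintype.card β / Q) * rootedMean V F p

lemma extensionBound_nonneg {F : Finset (Finset β)} {p Q : ℝ} (hp : 0 ≤ p) (hQ : 0 ≤ Q) (u : ℕ) :
    0 ≤ extensionBound V F p Q u := by
  have := rootedMean_nonneg (V := V) (F := F) hp
  unfold extensionBound
  positivity

variable [DecidableEq V] {F : Finset (Finset β)} {p Q : ℝ} (hp : 0 ≤ p) (hQ : 0 < Q)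
  (hΦ : Q * Fintype.card V ≤ Phi (Fintype.card V) p F)

include hp hQ hΦ

lemma card_filter_map_subset_mul_pow_le {I : Finset (Finset β)} (hIF : I ⊆ F) (hI : I.Nonempty)
    {U : Finset V} (hU : U.Nonempty) :
    #{w : β ↪ V | ∀ e ∈ I, e.map w ⊆ U} * p ^ (#F - #I) ≤
      #U ^ Fintype.card β * (rootedMean V F p / Q) := by
  have hV : 1 ≤ Fintype.card V := hU.card_pos.trans_le (card_le_univ U)
  have hU1 : 1 ≤ #U := hU.card_pos
  set J := I.sup id
  have hJ : #J ≤ Fintype.card β := card_le_univ J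
  calc (#{w : β ↪ V | ∀ e ∈ I, e.map w ⊆ U} : ℝ) * p ^ (#F - #I)
      ≤ (#U ^ #J * Fintype.card V ^ (Fintype.card β - #J) : ℕ) * p ^ (#F - #I) := by
        gcongr
        refine (card_le_card fun w hw ↦ ?_).trans (card_filter_forall_mem_le J U)
        simp only [mem_filter_univ, J, mem_sup, id] at hw ⊢
        rintro j ⟨e, he, hj⟩
        exact hw e he (mem_map_of_mem w hj)
    _ = #U ^ #J * ((Fintype.card V : ℝ) ^ (Fintype.card β - #J) * p ^ (#F - #I)) := by
        push_cast
        ring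
    _ ≤ _ := by
        gcongr
        · exact_mod_cast hU1
        · exact pow_sub_mul_pow_sub_le (mod_cast hV) hp hQ hJ (card_le_card hIF) <|
            hΦ.trans (Phi_le hp hIF hI fun e he ↦ le_sup (f := id) he)

lemma card_filter_eq_mul_pow_le {U : Finset V} (hU : U.Nonempty) {D : Finset (Finset V)}
    (hD : ∀ e ∈ D, e ⊆ U) {I : Finset (Finset β)} (hIF : I ⊆ F) :
    #{w ∈ placementsMeeting β U | {e ∈ F | e.map w ∈ D} = I} * p ^ (#F - #I) ≤
      (if I = ∅ then Fintype.card β * #U * rootedMean V F p else 0) +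
      #U ^ Fintype.card β * (rootedMean V F p / Q) := by
  obtain rfl | hI := I.eq_empty_or_nonempty
  · have hcard : #{w ∈ placementsMeeting β U | {e ∈ F | e.map w ∈ D} = ∅} ≤ _ :=
      (card_filter_le _ _).trans (card_placementsMeeting_le U)
    rw [if_pos rfl, card_empty, Nat.sub_zero]
    have hN := rootedMean_nonneg (V := V) (F := F) hp
    refine le_add_of_le_of_nonneg ?_ (by positivity)
    calc _ ≤ (Fintype.card β * (#U * Fintype.card V ^ (Fintype.card β - 1)) : ℕ) * p ^ #F := by
          gcongr
      _ = _ := by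
          rw [rootedMean]
          push_cast
          ring
  · rw [if_neg hI.ne_empty, zero_add]
    refine le_trans ?_ (card_filter_map_subset_mul_pow_le hp hQ hΦ hIF hI hU)
    gcongr ?_ * _
    refine mod_cast card_le_card fun w hw ↦ (mem_filter_univ _).2 fun e he ↦ hD _ ?_
    rw [mem_filter] at hw
    rw [← hw.2, mem_filter] at he
    exact he.2

lemma sum_placementsMeeting_pow_le {U : Finset V} {u : ℕ} (hU : #U ≤ u) {D : Finset (Finset V)}
    (hD : ∀ e ∈ D, e ⊆ U) :
    ∑ w ∈ placementsMeeting β U, p ^ #(copyEdges F w \ D) ≤ extensionBound V F p Q u := by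
  obtain rfl | hne := U.eq_empty_or_nonempty
  · simpa [placementsMeeting] using extensionBound_nonneg hp hQ.le u
  have hN := rootedMean_nonneg (V := V) (F := F) hp
  calc ∑ w ∈ placementsMeeting β U, p ^ #(copyEdges F w \ D)
      = ∑ I ∈ F.powerset, ∑ w ∈ placementsMeeting β U with {e ∈ F | e.map w ∈ D} = I,
          p ^ (#F - #{e ∈ F | e.map w ∈ D}) := by
        simp only [card_copyEdges_sdiff]
        exact (sum_fiberwise_of_maps_to (fun w _ ↦ mem_powerset.2 (filter_subset _ _)) _).symm
    _ = ∑ I ∈ F.powerset,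
          #{w ∈ placementsMeeting β U | {e ∈ F | e.map w ∈ D} = I} * p ^ (#F - #I) := by
        refine sum_congr rfl fun I _ ↦ ?_
        rw [← nsmul_eq_mul, ← sum_const]
        exact sum_congr rfl fun w hw ↦ by rw [(mem_filter.1 hw).2]
    _ ≤ ∑ I ∈ F.powerset,
          ((if I = ∅ then Fintype.card β * #U * rootedMean V F p else 0) +
            #U ^ Fintype.card β * (rootedMean V F p / Q)) :=
        sum_le_sum fun I hI ↦
          card_filter_eq_mul_pow_le hp hQ hΦ hne hD (mem_powerset.1 hI)
    _ = (Fintype.card β * #U + 2 ^ #F * #U ^ Fintype.card β / Q) * rootedMean V F p := by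
        rw [sum_add_distrib, sum_ite_eq', if_pos (empty_mem_powerset F), sum_const, card_powerset,
          nsmul_eq_mul]
        push_cast
        ring
    _ ≤ extensionBound V F p Q u := by
        unfold extensionBound
        gcongr

lemma sum_overlappingPairs_pow_le :
    ∑ q ∈ overlappingPairs β V, p ^ #(pairEdges F q) ≤
      (Fintype.card V : ℝ) ^ Fintype.card β * p ^ #F *
        extensionBound V F p Q (Fintype.card β) := by
  calc ∑ q ∈ overlappingPairs β V, p ^ #(pairEdges F q)
      = ∑ w : β ↪ V, ∑ w' ∈ placementsMeeting β (univ.map w), p ^ #(pairEdges F (w, w')) :=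
        sum_finset_product _ _ _ fun q ↦ by simp [mem_overlappingPairs]
    _ = ∑ w : β ↪ V, p ^ #F *
          ∑ w' ∈ placementsMeeting β (univ.map w), p ^ #(copyEdges F w' \ copyEdges F w) := by
        refine sum_congr rfl fun w _ ↦ ?_
        rw [mul_sum]
        refine sum_congr rfl fun w' _ ↦ ?_
        rw [← pow_add, ← sdiff_empty (s := pairEdges F (w, w')), card_pairEdges_sdiff, sdiff_empty,
          empty_union, card_copyEdges]
    _ ≤ ∑ _w : β ↪ V, p ^ #F * extensionBound V F p Q (Fintype.card β) := by
        gcongr with w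
        exact sum_placementsMeeting_pow_le hp hQ hΦ (card_map _).le
          fun e ↦ subset_map_univ_of_mem_copyEdges
    _ ≤ (Fintype.card V : ℝ) ^ Fintype.card β * p ^ #F *
          extensionBound V F p Q (Fintype.card β) := by
        have hcard : Fintype.card (β ↪ V) ≤ Fintype.card V ^ Fintype.card β := by
          rw [Fintype.card_embedding_eq]
          exact Nat.descFactorial_le_pow _ _
        rw [sum_const, nsmul_eq_mul, card_univ, ← mul_assoc]
        gcongr
        · exact extensionBound_nonneg hp hQ.le _
        · exact_mod_cast hcard

lemma sum_overlappingPairs_filter_fst_pow_le {U : Finset V} {u : ℕ}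
    (hU : #U + Fintype.card β ≤ u) {D : Finset (Finset V)} (hD : ∀ e ∈ D, e ⊆ U) :
    ∑ q ∈ overlappingPairs β V with q.1 ∈ placementsMeeting β U, p ^ #(pairEdges F q \ D) ≤
      extensionBound V F p Q u ^ 2 := by
  calc ∑ q ∈ overlappingPairs β V with q.1 ∈ placementsMeeting β U, p ^ #(pairEdges F q \ D)
      = ∑ w ∈ placementsMeeting β U, p ^ #(copyEdges F w \ D) *
          ∑ w' ∈ placementsMeeting β (univ.map w),
            p ^ #(copyEdges F w' \ (D ∪ copyEdges F w)) := by
        simp only [mul_sum, ← pow_add]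
        rw [sum_finset_product (r := {q ∈ overlappingPairs β V | q.1 ∈ placementsMeeting β U})]
        · exact sum_congr rfl fun w _ ↦ sum_congr rfl fun w' _ ↦ by rw [card_pairEdges_sdiff]
        · simp [mem_overlappingPairs, and_comm]
    _ ≤ ∑ w ∈ placementsMeeting β U, p ^ #(copyEdges F w \ D) * extensionBound V F p Q u := by
        gcongr with w
        refine (sum_le_sum_of_subset_of_nonneg
          (placementsMeeting_mono (subset_union_right (s₁ := U))) fun _ _ _ ↦ by positivity).trans
          (sum_placementsMeeting_pow_le hp hQ hΦ ?_ fun e he ↦ ?_)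
        · exact (card_union_le _ _).trans (by rwa [card_map])
        · exact (mem_union.1 he).elim (fun he ↦ (hD e he).trans subset_union_left)
            fun he ↦ (subset_map_univ_of_mem_copyEdges he).trans subset_union_right
    _ ≤ extensionBound V F p Q u * extensionBound V F p Q u := by
        rw [← sum_mul]
        gcongr
        · exact extensionBound_nonneg hp hQ.le u
        · exact sum_placementsMeeting_pow_le hp hQ hΦ ((Nat.le_add_right _ _).trans hU) hD
    _ = extensionBound V F p Q u ^ 2 := (sq _).symm

lemma sum_overlappingPairs_filter_snd_pow_le {U : Finset V} {u : ℕ}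
    (hU : #U + Fintype.card β ≤ u) {D : Finset (Finset V)} (hD : ∀ e ∈ D, e ⊆ U) :
    ∑ q ∈ overlappingPairs β V with q.2 ∈ placementsMeeting β U, p ^ #(pairEdges F q \ D) ≤
      extensionBound V F p Q u ^ 2 := by
  refine (sum_equiv (Equiv.prodComm _ _) (fun q ↦ ?_) fun q _ ↦ ?_).trans_le
    (sum_overlappingPairs_filter_fst_pow_le hp hQ hΦ hU hD)
  · simp only [mem_filter, Equiv.prodComm_apply, swap_mem_overlappingPairs, Prod.fst_swap]
  · rw [Equiv.prodComm_apply, pairEdges_swap]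

lemma sum_not_disjoint_pairEdges_pow_le (hF : ∅ ∉ F) (q : (β ↪ V) × (β ↪ V)) :
    ∑ q' ∈ overlappingPairs β V with ¬ Disjoint (pairEdges F q) (pairEdges F q'),
        p ^ #(pairEdges F q ∪ pairEdges F q') ≤
      p ^ #(pairEdges F q) * (2 * extensionBound V F p Q (3 * Fintype.card β) ^ 2) := by
  set D := pairEdges F q
  set U : Finset V := univ.map q.1 ∪ univ.map q.2
  have hDU : ∀ e ∈ D, e ⊆ U := fun e he ↦ (mem_union.1 he).elim
    (fun he ↦ (subset_map_univ_of_mem_copyEdges he).trans subset_union_left)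
    fun he ↦ (subset_map_univ_of_mem_copyEdges he).trans subset_union_right
  have hU : #U + Fintype.card β ≤ 3 * Fintype.card β := by
    have := card_union_le (univ.map q.1) (univ.map q.2)
    rw [card_map, card_map, card_univ] at this
    grind
  have hmeet : ∀ w : β ↪ V, ¬ Disjoint D (copyEdges F w) → w ∈ placementsMeeting β U := by
    intro w hw
    obtain ⟨e, heD, he⟩ := not_disjoint_iff.1 hw
    obtain ⟨f, hf, rfl⟩ := mem_map.1 he
    obtain ⟨v, hv⟩ := nonempty_iff_ne_empty.2 (ne_of_mem_of_not_mem hf hF)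
    exact mem_placementsMeeting.2 ⟨v, hDU _ heD (mem_map_of_mem w hv)⟩
  calc ∑ q' ∈ overlappingPairs β V with ¬ Disjoint D (pairEdges F q'), p ^ #(D ∪ pairEdges F q')
      = p ^ #D * ∑ q' ∈ overlappingPairs β V with ¬ Disjoint D (pairEdges F q'),
          p ^ #(pairEdges F q' \ D) := by
        rw [mul_sum]
        refine sum_congr rfl fun q' _ ↦ ?_
        rw [← pow_add, ← union_sdiff_self_eq_union, card_union_of_disjoint disjoint_sdiff]
    _ ≤ p ^ #D * (2 * extensionBound V F p Q (3 * Fintype.card β) ^ 2) := by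
        gcongr
        rw [two_mul]
        refine le_trans ?_ (add_le_add (sum_overlappingPairs_filter_fst_pow_le hp hQ hΦ hU hDU)
          (sum_overlappingPairs_filter_snd_pow_le hp hQ hΦ hU hDU))
        rw [← sum_union_inter, ← filter_or]
        refine le_add_of_le_of_nonneg (sum_le_sum_of_subset_of_nonneg ?_ ?_) ?_
        · refine monotone_filter_right _ fun q' _ hq' ↦ ?_
          rw [pairEdges, disjoint_union_right, not_and_or] at hq'
          exact hq'.imp (hmeet _) (hmeet _)
        all_goals intros; positivity

end Extension

section OverlappingCopies

variable {V β : Type*} [Fintype V] [Fintype β] [Nonempty β]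

lemma extensionBound_mul_card (F : Finset (Finset β)) (p : ℝ) (c : ℕ) :
    extensionBound V F p (2 ^ #F * Fintype.card β ^ Fintype.card β) (c * Fintype.card β) =
      (c * Fintype.card β ^ 2 + c ^ Fintype.card β) * rootedMean V F p := by
  rw [extensionBound]
  congr 1
  push_cast
  rw [mul_pow]
  field_simp

lemma card_pow_mul_pow_eq_mul_rootedMean (F : Finset (Finset β)) (p : ℝ) :
    (Fintype.card V : ℝ) ^ Fintype.card β * p ^ #F = Fintype.card V * rootedMean V F p := by
  rw [rootedMean, ← mul_assoc, ← pow_succ', Nat.sub_add_cancel Fintype.card_pos]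

lemma card_mul_rootedMean_sq (F : Finset (Finset β)) (p : ℝ) :
    Fintype.card V * rootedMean V F p ^ 2 =
      (Fintype.card V : ℝ) ^ (2 * Fintype.card β - 1) * p ^ (2 * #F) := by
  have hb : 2 * Fintype.card β - 1 = Fintype.card β + (Fintype.card β - 1) := by
    have := Fintype.card_pos (α := β)
    omega
  rw [hb, pow_add, two_mul, pow_add, mul_mul_mul_comm, card_pow_mul_pow_eq_mul_rootedMean,
    ← rootedMean]
  ring

lemma two_mul_extensionBound_sq_le {F : Finset (Finset β)} {p δ : ℝ}
    (hδ : (3 * Fintype.card β ^ 2 + 3 ^ Fintype.card β) ^ 2 ≤ δ * Fintype.card V) :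
    2 * extensionBound V F p (2 ^ #F * Fintype.card β ^ Fintype.card β)
        (3 * Fintype.card β) ^ 2 ≤
      δ * (2 * Fintype.card β ^ 2 * (Fintype.card V * rootedMean V F p ^ 2)) := by
  have hb : 1 ≤ (Fintype.card β : ℝ) ^ 2 := one_le_pow₀ (mod_cast Fintype.card_pos)
  calc 2 * extensionBound V F p (2 ^ #F * Fintype.card β ^ Fintype.card β)
          (3 * Fintype.card β) ^ 2
      = (3 * Fintype.card β ^ 2 + 3 ^ Fintype.card β) ^ 2 * (2 * rootedMean V F p ^ 2) := by
        rw [extensionBound_mul_card, Nat.cast_ofNat]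
        ring
    _ ≤ δ * Fintype.card V * (2 * (rootedMean V F p ^ 2 * Fintype.card β ^ 2)) := by
        gcongr
        · exact (sq_nonneg _).trans hδ
        · exact le_mul_of_one_le_right (sq_nonneg _) hb
    _ = δ * (2 * Fintype.card β ^ 2 * (Fintype.card V * rootedMean V F p ^ 2)) := by ring

variable [DecidableEq V] {F : Finset (Finset β)} {p δ : ℝ}
  (hΦ : 2 ^ #F * Fintype.card β ^ Fintype.card β * Fintype.card V ≤ Phi (Fintype.card V) p F)

include hΦ

lemma sum_overlappingPairs_pow_le_two_mul (hp : 0 ≤ p) :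
    ∑ q ∈ overlappingPairs β V, p ^ #(pairEdges F q) ≤
      2 * Fintype.card β ^ 2 * (Fintype.card V * rootedMean V F p ^ 2) := by
  have hb : 1 ≤ (Fintype.card β : ℝ) ^ 2 := one_le_pow₀ (mod_cast Fintype.card_pos)
  calc ∑ q ∈ overlappingPairs β V, p ^ #(pairEdges F q)
      ≤ Fintype.card V * rootedMean V F p *
          extensionBound V F p (2 ^ #F * Fintype.card β ^ Fintype.card β)
            (1 * Fintype.card β) := by
        rw [one_mul, ← card_pow_mul_pow_eq_mul_rootedMean]
        exact sum_overlappingPairs_pow_le hp (by positivity) hΦ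
    _ = (Fintype.card β ^ 2 + 1) * (Fintype.card V * rootedMean V F p ^ 2) := by
        rw [extensionBound_mul_card, Nat.cast_one, one_pow]
        ring
    _ ≤ 2 * Fintype.card β ^ 2 * (Fintype.card V * rootedMean V F p ^ 2) := by
        gcongr
        linarith

theorem one_sub_le_binomialExpect_overlappingPairs (K : Finset (Finset V)) (hF : ∅ ∉ F)
    (hp0 : 0 ≤ p) (hp1 : p ≤ 1)
    (hδ : (3 * Fintype.card β ^ 2 + 3 ^ Fintype.card β) ^ 2 ≤ δ * Fintype.card V) :
    1 - δ ≤ binomialExpect K p ({E | (#{q ∈ overlappingPairs β V | pairEdges F q ⊆ E} : ℝ) ≤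
      4 * Fintype.card β ^ 2 * Fintype.card V ^ (2 * Fintype.card β - 1) *
        p ^ (2 * #F)}.indicator 1) := by
  have hV : 0 < (Fintype.card V : ℝ) := (Nat.cast_nonneg _).lt_of_ne fun h ↦
    absurd (hδ.trans_eq (by rw [← h, mul_zero])) (not_le.2 (by positivity))
  have hpF : 0 < p ^ #F := by
    obtain rfl | hne := F.eq_empty_or_nonempty
    · simp
    · exact pos_of_mul_pos_right ((by positivity : (0 : ℝ) < _).trans_le <| hΦ.trans <|
        Phi_le hp0 Subset.rfl hne fun e _ ↦ subset_univ e) (by positivity)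
  set m : ℝ := 2 * Fintype.card β ^ 2 * (Fintype.card V * rootedMean V F p ^ 2) with hm
  have hm_pos : 0 < m := by
    rw [hm, rootedMean]
    positivity
  have hmean : ∑ q ∈ overlappingPairs β V, p ^ #(pairEdges F q) ≤ m :=
    sum_overlappingPairs_pow_le_two_mul hΦ hp0
  have htwo : 4 * Fintype.card β ^ 2 * Fintype.card V ^ (2 * Fintype.card β - 1) * p ^ (2 * #F) =
      2 * m := by
    rw [hm, card_mul_rootedMean_sq]
    ring
  rw [htwo]
  refine one_sub_le_binomialExpect_indicator_card_le _ _ hp0 hp1 hm_pos hmean ?_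
  calc _ ≤ ∑ q ∈ overlappingPairs β V, p ^ #(pairEdges F q) *
          (2 * extensionBound V F p _ (3 * Fintype.card β) ^ 2) :=
        sum_le_sum fun q _ ↦ sum_not_disjoint_pairEdges_pow_le hp0 (by positivity) hΦ hF q
    _ ≤ m * (2 * extensionBound V F p _ (3 * Fintype.card β) ^ 2) := by
        rw [← sum_mul]
        gcongr
    _ ≤ m * (δ * m) := mul_le_mul_of_nonneg_left (two_mul_extensionBound_sq_le hδ) hm_pos.le
    _ = δ * m ^ 2 := by ring

end OverlappingCopies

section Paths

lemma edgeIdx_eq_Ico (k d x i : ℕ) : edgeIdx k d x i = Ico (x + i * d) (x + i * d + k) := by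
  rw [edgeIdx, range_eq_Ico, image_add_left_Ico, add_zero]

lemma add_card_mul_le_card_biUnion_edgeIdx (ℓ d x : ℕ) {I : Finset ℕ} (hI : I.Nonempty) :
    ℓ + #I * d ≤ #(I.biUnion (edgeIdx (ℓ + d) d x)) := by
  induction I using Finset.induction_on_max with
  | empty => exact absurd hI not_nonempty_empty
  | insert i I hlt ih =>
    rw [card_insert_of_notMem fun h ↦ (hlt i h).false, biUnion_insert, add_one_mul]
    obtain rfl | hne := I.eq_empty_or_nonempty
    · simp [edgeIdx_eq_Ico]
    have hnew : Ico (x + i * d + ℓ) (x + i * d + ℓ + d) ⊆ edgeIdx (ℓ + d) d x i := by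
      rw [edgeIdx_eq_Ico]
      exact Ico_subset_Ico (by omega) (by omega)
    have hdisj : Disjoint (Ico (x + i * d + ℓ) (x + i * d + ℓ + d))
        (I.biUnion (edgeIdx (ℓ + d) d x)) := by
      rw [disjoint_biUnion_right]
      intro j hj
      have : (j + 1) * d ≤ i * d := Nat.mul_le_mul_right d (hlt j hj)
      rw [edgeIdx_eq_Ico, disjoint_left]
      grind
    calc ℓ + (#I * d + d)
        ≤ d + #(I.biUnion (edgeIdx (ℓ + d) d x)) := by linarith [ih hne]
      _ = #(Ico (x + i * d + ℓ) (x + i * d + ℓ + d) ∪ I.biUnion (edgeIdx (ℓ + d) d x)) := by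
          rw [card_union_of_disjoint hdisj, Nat.card_Ico, Nat.add_sub_cancel_left]
      _ ≤ #(edgeIdx (ℓ + d) d x i ∪ I.biUnion (edgeIdx (ℓ + d) d x)) :=
          card_le_card (union_subset_union_left hnew)

/-- The positions of the vertices of the `i`-th edge of `P_{a,x}` in a `b`-tuple. -/
def paxEdge (k ℓ x b i : ℕ) : Finset (Fin b) := {m | (m : ℕ) ∈ edgeIdx k (k - ℓ) x i}

/-- `P_{a,x}` as a hypergraph on the positions of a `b`-tuple. -/
def paxEdges (k ℓ a x b : ℕ) : Finset (Finset (Fin b)) := (range a).image (paxEdge k ℓ x b)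

variable {k ℓ a x b n : ℕ}

lemma map_paxEdge {i : ℕ} (hℓk : ℓ ≤ k) (hb : x + ℓ + (k - ℓ) * a ≤ b) (hi : i < a) :
    (paxEdge k ℓ x b i).map Fin.valEmbedding = edgeIdx k (k - ℓ) x i := by
  have hib : (i + 1) * (k - ℓ) ≤ (k - ℓ) * a := by
    rw [mul_comm]
    exact Nat.mul_le_mul_left _ hi
  ext y
  simp only [paxEdge, edgeIdx_eq_Ico, mem_map, mem_filter_univ, Fin.valEmbedding_apply, mem_Ico]
  refine ⟨?_, fun hy ↦ ⟨⟨y, ?_⟩, hy, rfl⟩⟩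
  · rintro ⟨m, hm, rfl⟩
    exact hm
  · rw [add_one_mul] at hib
    omega

lemma card_paxEdge {i : ℕ} (hℓk : ℓ ≤ k) (hb : x + ℓ + (k - ℓ) * a ≤ b) (hi : i < a) :
    #(paxEdge k ℓ x b i) = k := by
  rw [← card_map Fin.valEmbedding, map_paxEdge hℓk hb hi, edgeIdx_eq_Ico, Nat.card_Ico,
    Nat.add_sub_cancel_left]

lemma add_card_mul_le_card_biUnion_paxEdge (hℓk : ℓ ≤ k) (hb : x + ℓ + (k - ℓ) * a ≤ b)
    {I : Finset ℕ} (hIa : I ⊆ range a) (hI : I.Nonempty) :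
    ℓ + #I * (k - ℓ) ≤ #(I.biUnion (paxEdge k ℓ x b)) := by
  rw [← card_map Fin.valEmbedding, map_eq_image, biUnion_image]
  simp only [← map_eq_image]
  rw [biUnion_congr rfl fun i hi ↦ map_paxEdge hℓk hb (mem_range.1 (hIa hi))]
  simpa [hℓk] using add_card_mul_le_card_biUnion_edgeIdx ℓ (k - ℓ) x hI

lemma card_paxEdges (hℓk : ℓ < k) (hb : x + ℓ + (k - ℓ) * a ≤ b) : #(paxEdges k ℓ a x b) = a := by
  rw [paxEdges, card_image_of_injOn, card_range]
  intro i hi j hj hij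
  by_contra hne
  rw [coe_range, Set.mem_Iio] at hi hj
  have := add_card_mul_le_card_biUnion_paxEdge (I := {i, j}) hℓk.le hb (by grind) (by simp)
  rw [card_pair hne, biUnion_insert, singleton_biUnion, hij, union_self,
    card_paxEdge hℓk.le hb hj] at this
  omega

lemma empty_notMem_paxEdges (hℓk : ℓ < k) (hb : x + ℓ + (k - ℓ) * a ≤ b) :
    ∅ ∉ paxEdges k ℓ a x b := by
  intro h
  obtain ⟨i, hi, hempty⟩ := mem_image.1 h
  have := card_paxEdge hℓk.le hb (mem_range.1 hi)
  rw [hempty, card_empty] at this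
  omega

lemma le_Phi_paxEdges (hℓk : ℓ ≤ k) (ha : 1 ≤ a) (hb : x + ℓ + (k - ℓ) * a ≤ b) (hn : 1 ≤ n)
    {p r : ℝ} (hp : 0 ≤ p) (h : ∀ t, 1 ≤ t → t ≤ a → r ≤ (n : ℝ) ^ (ℓ + t * (k - ℓ)) * p ^ t) :
    r ≤ Phi n p (paxEdges k ℓ a x b) := by
  refine le_Phi ((nonempty_range_iff.2 (by omega)).image _) fun W D hDF hD hW ↦ ?_
  obtain ⟨I, hIa, rfl⟩ := subset_image_iff.1 hDF
  have hI : #(I.image (paxEdge k ℓ x b)) ≤ #I := card_image_le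
  have hW' : ℓ + #(I.image (paxEdge k ℓ x b)) * (k - ℓ) ≤ #W := calc
    ℓ + #(I.image (paxEdge k ℓ x b)) * (k - ℓ) ≤ ℓ + #I * (k - ℓ) := by gcongr
    _ ≤ #(I.biUnion (paxEdge k ℓ x b)) :=
      add_card_mul_le_card_biUnion_paxEdge hℓk hb (mod_cast hIa) (image_nonempty.1 hD)
    _ ≤ #W := card_le_card <| biUnion_subset.2 fun i hi ↦ hW _ (mem_image_of_mem _ hi)
  refine (h _ hD.card_pos ((card_le_card hDF).trans ?_)).trans ?_
  · exact card_image_le.trans (card_range a).le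
  · gcongr
    exact mod_cast hn

lemma spansPax_coe_iff {E : Finset (Finset (Fin n))} {w : Fin b ↪ Fin n} :
    SpansPax k ℓ a x E w ↔ copyEdges (paxEdges k ℓ a x b) w ⊆ E := by
  simp [SpansPax, copyEdges, paxEdges, paxEdge, w.injective, image_subset_iff, map_eq_image]

lemma paxOverlapPairCount_eq_card (E : Finset (Finset (Fin n))) :
    paxOverlapPairCount n k ℓ a x b E =
      #{q ∈ overlappingPairs (Fin b) (Fin n) | pairEdges (paxEdges k ℓ a x b) q ⊆ E} := by
  symm
  refine card_nbij (fun q ↦ (q.1, q.2)) (fun q hq ↦ ?_) (fun q _ q' _ h ↦ ?_) fun w hw ↦ ?_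
  · simp only [coe_filter, Set.mem_ofPred_eq, overlappingPairs, pairEdges, union_subset_iff,
      mem_filter_univ, ← spansPax_coe_iff] at hq
    exact (mem_filter_univ _).2 ⟨hq.2.1, hq.2.2, hq.1⟩
  · simpa [Prod.ext_iff] using h
  · obtain ⟨h₁, h₂, hmeet⟩ := (mem_filter_univ _).1 (mem_coe.1 hw)
    refine ⟨(⟨w.1, h₁.1⟩, ⟨w.2, h₂.1⟩), ?_, rfl⟩
    simp only [coe_filter, Set.mem_ofPred_eq, overlappingPairs, pairEdges, union_subset_iff,
      mem_filter_univ, ← spansPax_coe_iff]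
    exact ⟨hmeet, h₁, h₂⟩

lemma gProb_eq_binomialExpect (k : ℕ) (p : ℝ) (A : Finset (Finset (Fin n)) → Prop) :
    gProb n k p A = binomialExpect (kSets n k) p ({E | A E}.indicator 1) := by
  simp [gProb, binomialExpect_apply, binomialWeight, sum_filter, Set.indicator_apply]

end Paths

section Density

variable {k ℓ a x b : ℕ} {ε : ℝ}

lemma mul_le_pow_add_mul_mul_pow {d t : ℕ} {y c p Q : ℝ} (hy : 0 < y) (hc : 0 ≤ c)
    (hp : c * y ^ (-(d : ℝ) - ε) ≤ p) (hQ : Q ≤ c ^ t * y ^ ((ℓ : ℝ) - 1 - t * ε)) :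
    Q * y ≤ y ^ (ℓ + t * d) * p ^ t := by
  calc Q * y ≤ c ^ t * y ^ ((ℓ : ℝ) - 1 - t * ε) * y := by gcongr
    _ = y ^ (ℓ + t * d) * (c * y ^ (-(d : ℝ) - ε)) ^ t := by
        rw [mul_pow, ← Real.rpow_mul_natCast hy.le, ← Real.rpow_natCast y (ℓ + t * d),
          mul_left_comm, ← Real.rpow_add hy, mul_assoc, ← Real.rpow_add_one hy.ne']
        congr 2
        push_cast
        ring
    _ ≤ y ^ (ℓ + t * d) * p ^ t := by gcongr

lemma eventually_le_rpow_sub_mul (hℓ : 2 ≤ ℓ) (hε : a * ε < ℓ - 1) (Q : ℝ) :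
    ∀ᶠ n : ℕ in Filter.atTop, ∀ t ≤ a, Q ≤ (n : ℝ) ^ ((ℓ : ℝ) - 1 - t * ε) := by
  refine (Set.finite_Iic a).eventually_all.2 fun t ht ↦ ?_
  have hℓ' : (2 : ℝ) ≤ ℓ := mod_cast hℓ
  have hta : (t : ℝ) ≤ a := mod_cast ht
  have htε : t * ε < ℓ - 1 := by
    obtain hε0 | hε0 := le_total ε 0
    · linarith [mul_nonpos_of_nonneg_of_nonpos t.cast_nonneg hε0]
    · exact (mul_le_mul_of_nonneg_right hta hε0).trans_lt hε
  exact ((tendsto_rpow_atTop (sub_pos.2 htε)).comp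
    tendsto_natCast_atTop_atTop).eventually_ge_atTop Q

theorem eventually_mul_le_Phi_paxEdges (hℓ : 1 ≤ ℓ) (hℓk : ℓ ≤ k) (ha : 1 ≤ a)
    (hb : x + ℓ + (k - ℓ) * a ≤ b) (hε : 2 ≤ ℓ → a * ε < ℓ - 1) {Q C : ℝ} (hQ : 1 ≤ Q)
    (hQC : Q ≤ C) :
    ∀ᶠ n : ℕ in Filter.atTop, ∀ p : ℝ, 0 ≤ p →
      (2 ≤ ℓ → (n : ℝ) ^ (-((k : ℝ) - ℓ) - ε) ≤ p) →
      (ℓ = 1 → C * (n : ℝ) ^ (-((k : ℝ) - 1)) ≤ p) → Q * n ≤ Phi n p (paxEdges k ℓ a x b) := by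
  obtain rfl | hℓ2 := hℓ.eq_or_lt
  · filter_upwards [Filter.eventually_ge_atTop 1] with n hn p hp0 _ hp
    refine le_Phi_paxEdges hℓk ha hb hn hp0 fun t ht _ ↦
      mul_le_pow_add_mul_mul_pow (c := C) (ε := 0) (mod_cast hn) (by linarith) ?_ ?_
    · simpa [hℓk] using hp rfl
    · simpa using hQC.trans (le_self_pow₀ (hQ.trans hQC) (by omega))
  · filter_upwards [Filter.eventually_ge_atTop 1, eventually_le_rpow_sub_mul hℓ2 (hε hℓ2) Q]
      with n hn hnQ p hp0 hp _
    refine le_Phi_paxEdges hℓk ha hb hn hp0 fun t _ hta ↦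
      mul_le_pow_add_mul_mul_pow (c := 1) (ε := ε) (mod_cast hn) zero_le_one ?_ ?_
    · simpa [hℓk] using hp hℓ2
    · simpa using hnQ t hta

end Density

theorem few_overlapping_pax_pairs_general (k ℓ a x : ℕ) (hℓ : 1 ≤ ℓ) (hℓk : ℓ < k) (ha : 1 ≤ a)
    (ε : ℝ) (hε : 2 ≤ ℓ → a * ε < ℓ - 1) :
    ∃ C₀ : ℕ, ∀ C : ℕ, C₀ ≤ C →
      ∀ δ : ℝ, 0 < δ → ∃ n₀ : ℕ, ∀ n : ℕ, n₀ ≤ n →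
        ∀ p : ℝ, 0 ≤ p → p ≤ 1 →
          ((2 ≤ ℓ → (n : ℝ) ^ (-((k : ℝ) - (ℓ : ℝ)) - ε) ≤ p) ∧
           (ℓ = 1 → (C : ℝ) * (n : ℝ) ^ (-((k : ℝ) - 1)) ≤ p)) →
          1 - δ ≤ gProb n k p (fun E =>
            (paxOverlapPairCount n k ℓ a x (2 * x + ℓ + (k - ℓ) * a) E : ℝ) ≤
              4 * ((2 * x + ℓ + (k - ℓ) * a : ℕ) : ℝ) ^ 2 *
                (n : ℝ) ^ (2 * (2 * x + ℓ + (k - ℓ) * a) - 1) * p ^ (2 * a)) := by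
  have hb : x + ℓ + (k - ℓ) * a ≤ 2 * x + ℓ + (k - ℓ) * a := by omega
  have hb0 : 0 < 2 * x + ℓ + (k - ℓ) * a := by omega
  generalize 2 * x + ℓ + (k - ℓ) * a = b at hb hb0 ⊢
  have : Nonempty (Fin b) := Fin.pos_iff_nonempty.1 hb0
  have hQ : 1 ≤ 2 ^ a * b ^ b := Nat.one_le_iff_ne_zero.2 (by positivity)
  refine ⟨2 ^ a * b ^ b, fun C hC δ hδ ↦ Filter.eventually_atTop.1 ?_⟩
  have hlarge : ∀ᶠ n : ℕ in Filter.atTop, (3 * b ^ 2 + 3 ^ b : ℝ) ^ 2 ≤ δ * n :=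
    (tendsto_natCast_atTop_atTop.const_mul_atTop hδ).eventually_ge_atTop _
  filter_upwards [hlarge, eventually_mul_le_Phi_paxEdges (Q := 2 ^ a * b ^ b) (C := C) hℓ hℓk.le
    ha hb hε (mod_cast hQ) (mod_cast hC)] with n hn hΦ p hp0 hp1 hp
  have hF := card_paxEdges hℓk hb
  simp only [gProb_eq_binomialExpect, paxOverlapPairCount_eq_card]
  simpa [hF] using one_sub_le_binomialExpect_overlappingPairs (V := Fin n)
    (F := paxEdges k ℓ a x b) (by simpa [hF] using hΦ p hp0 hp.1 hp.2) (kSets n k)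
    (empty_notMem_paxEdges hℓk hb) hp0 hp1 (by simpa using hn)

/-- Lemma 2.2(3). With probability `1 - o(1)`, `G^{(k)}(n,p)` contains at
most `4 b² n^{2b-1} p^{2a}` pairs of overlapping copies of `P_{a,x}`. -/
theorem few_overlapping_pax_pairs
    (k ℓ a x : ℕ) (hk : 3 ≤ k) (hl1 : 1 ≤ ℓ) (hlk : ℓ ≤ k - 1)
    (ha : 1 ≤ a) (hx : x ≤ k)
    (ε : ℝ) (hε0 : 0 < ε) (hε : ε ≤ (ℓ : ℝ) / (3 * (a : ℝ)))
    (γ : ℝ) (hγ : 0 < γ) :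
    ∃ C₀ : ℕ, ∀ C : ℕ, C₀ ≤ C →
      ∀ δ : ℝ, 0 < δ → ∃ n₀ : ℕ, ∀ n : ℕ, n₀ ≤ n →
        ∀ p : ℝ, 0 ≤ p → p ≤ 1 →
          ((2 ≤ ℓ → (n : ℝ) ^ (-((k : ℝ) - (ℓ : ℝ)) - ε) ≤ p) ∧
           (ℓ = 1 → (C : ℝ) * (n : ℝ) ^ (-((k : ℝ) - 1)) ≤ p)) →
          1 - δ ≤ gProb n k p (fun E =>
            (paxOverlapPairCount n k ℓ a x (2 * x + ℓ + (k - ℓ) * a) E : ℝ) ≤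
              4 * ((2 * x + ℓ + (k - ℓ) * a : ℕ) : ℝ) ^ 2 *
                (n : ℝ) ^ (2 * (2 * x + ℓ + (k - ℓ) * a) - 1) * p ^ (2 * a)) := by
  refine few_overlapping_pax_pairs_general k ℓ a x hl1 (by omega) ha ε fun hℓ ↦ ?_
  have hℓ' : (2 : ℝ) ≤ ℓ := mod_cast hℓ
  have ha' : (0 : ℝ) < a := mod_cast ha
  rw [le_div_iff₀ (by positivity)] at hε
  linarith
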